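/- Every Lebesgue measurable set F ⊆ ℝ^n with positive Lebesgue measure satisfies the Steinhaus property: for every finite set P ⊆ ℝ^n there exist δ > 0 and t ∈ ℝ^n such that t + δP ⊆ F. -/

import Mathlib

/-!
Shrink `F` to a compact subset `K` of positive Lebesgue measure `μ`. By continuity of translation in
measure (`tendsto_measure_vadd_sdiff_isCompact_isClosed`), `μ ((v +ᵥ K) \ K) → 0` as `v → 0`. Hence,
for each of the finitely many `p ∈ P`, the set of `x ∈ K` with `x + δ p ∉ K`, being a translate of
`(δ p + K) \ K`, has measure tending to `0` as `δ → 0⁺`. For small `δ` these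
exceptional sets cannot cover `K`, and any remaining point of `K` serves as `t`.
-/

open Set Metric Filter

/-- The Assouad dimension of a set in a (pseudo)metric space: the infimum of all `s ≥ 0`
for which there is a constant `C > 0` such that for all `0 < r < R` and all `x ∈ F`,
the set `B(x,R) ∩ F` can be covered by at most `C * (R/r)^s` sets of diameter at most `r`. -/
noncomputable def assouadDim {X : Type*} [PseudoMetricSpace X] (F : Set X) : ℝ :=
  sInf {s : ℝ | 0 ≤ s ∧ ∃ C : ℝ, 0 < C ∧ ∀ R : ℝ, 0 < R → ∀ r : ℝ, 0 < r → r < R →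
    ∀ x ∈ F, ∃ N : ℕ, ∃ U : Fin N → Set X,
      (Metric.closedBall x R ∩ F ⊆ ⋃ i, U i) ∧
      (∀ i, EMetric.diam (U i) ≤ ENNReal.ofReal r) ∧
      (N : ℝ) ≤ C * (R / r) ^ s}

/-- A similarity map: a bijection scaling all distances by a fixed constant `c > 0`. -/
def IsSimilarity {X : Type*} [NormedAddCommGroup X] (T : X → X) : Prop :=
  Function.Bijective T ∧ ∃ c : ℝ, 0 < c ∧ ∀ x y : X, ‖T x - T y‖ = c * ‖x - y‖

/-- `E` is a weak tangent to `F`: `E` is compact, contained in the closed unit ball, and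
there is a sequence of similarity maps `T k` with `d_H(E, T k (F) ∩ B(0,1)) → 0`. -/
def IsWeakTangent {X : Type*} [NormedAddCommGroup X] (E F : Set X) : Prop :=
  IsCompact E ∧ E ⊆ Metric.closedBall 0 1 ∧
  ∃ T : ℕ → X → X, (∀ k, IsSimilarity (T k)) ∧
    Filter.Tendsto
      (fun k => EMetric.hausdorffEdist E ((T k '' F) ∩ Metric.closedBall 0 1))
      Filter.atTop (nhds 0)

/-- The arithmetic patch of size `k`, scale `δ` and translate `t`, with respect to
the vectors `e i`. -/
def arithmeticPatch {X : Type*} [AddCommGroup X] [Module ℝ X] {d : ℕ}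
    (e : Fin d → X) (k : ℕ) (δ : ℝ) (t : X) : Set X :=
  {p | ∃ x : Fin d → ℕ, (∀ i, x i < k) ∧ p = t + δ • ∑ i, (x i : ℝ) • e i}

/-- `F` asymptotically contains arbitrarily large arithmetic patches w.r.t. the basis `e`. -/
def AsympContainsAP {X : Type*} [NormedAddCommGroup X] [Module ℝ X] {d : ℕ}
    (e : Fin d → X) (F : Set X) : Prop :=
  ∀ k : ℕ, ∀ ε : ℝ, 0 < ε → ∃ δ : ℝ, 0 < δ ∧ ∃ t : X, ∃ E : Set X, E ⊆ F ∧
    EMetric.hausdorffEdist E (arithmeticPatch e k δ t) ≤ ENNReal.ofReal (ε * δ)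

/-- `F` satisfies the asymptotic Steinhaus property. -/
def AsympSteinhaus {X : Type*} [NormedAddCommGroup X] [Module ℝ X] (F : Set X) : Prop :=
  ∀ P : Set X, P.Finite → ∀ ε : ℝ, 0 < ε → ∃ δ : ℝ, 0 < δ ∧ ∃ t : X, ∃ E : Set X, E ⊆ F ∧
    EMetric.hausdorffEdist E ((fun p => t + δ • p) '' P) ≤ ENNReal.ofReal (ε * δ)

/-- An arithmetic progression in `ℝ` of length `k`, gap `δ`, starting at `t`. -/
def arithmeticProgression (k : ℕ) (δ t : ℝ) : Set ℝ :=
  {y : ℝ | ∃ x : ℕ, x < k ∧ y = t + δ * x}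

/-- Every Lebesgue measurable set `F ⊆ ℝⁿ` of positive Lebesgue measure satisfies the
Steinhaus property: it contains a scaled translated copy of every finite set. -/
theorem steinhaus_of_pos_measure (n : ℕ) (F : Set (EuclideanSpace ℝ (Fin n)))
    (hmeas : MeasurableSet F) (hpos : 0 < MeasureTheory.volume F)
    (P : Set (EuclideanSpace ℝ (Fin n))) (hP : P.Finite) :
    ∃ δ : ℝ, 0 < δ ∧ ∃ t : EuclideanSpace ℝ (Fin n),
      (fun p => t + δ • p) '' P ⊆ F := by
  obtain ⟨K, hKF, hK, hKpos⟩ := hmeas.exists_lt_isCompact hpos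
  have key : ∀ p : EuclideanSpace ℝ (Fin n), Tendsto (fun δ : ℝ =>
      MeasureTheory.volume (K \ (fun x => x + δ • p) ⁻¹' K)) (nhdsWithin 0 (Ioi 0)) (nhds 0) := by
    intro p
    have hv : Tendsto (fun δ : ℝ => δ • p) (nhdsWithin 0 (Ioi 0)) (nhds 0) := by
      have : Continuous fun δ : ℝ => δ • p := by fun_prop
      simpa using (this.tendsto 0).mono_left nhdsWithin_le_nhds
    refine ((MeasureTheory.tendsto_measure_vadd_sdiff_isCompact_isClosed
      (μ := MeasureTheory.volume) hK hK.isClosed).comp hv).congr fun δ => ?_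
    -- Translating by `δ • p` carries the exceptional set onto `(δ • p +ᵥ K) \ K`.
    rw [Function.comp_apply, ← MeasureTheory.measure_preimage_add_right MeasureTheory.volume (δ • p)]
    congr 1
    ext x
    simp [Set.mem_vadd_set_iff_neg_vadd_mem, add_comm]
  have hsum : Tendsto (fun δ : ℝ => ∑ p ∈ hP.toFinset,
      MeasureTheory.volume (K \ (fun x => x + δ • p) ⁻¹' K)) (nhdsWithin 0 (Ioi 0)) (nhds 0) := by
    simpa using tendsto_finsetSum hP.toFinset fun p _ => key p
  obtain ⟨δ, hδ, hδpos⟩ :=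
    ((hsum.eventually_lt_const hKpos).and self_mem_nhdsWithin).exists
  have hnot : ¬ K ⊆ ⋃ p ∈ hP.toFinset, K \ (fun x => x + δ • p) ⁻¹' K := fun h =>
    absurd ((MeasureTheory.measure_mono h).trans (MeasureTheory.measure_biUnion_finset_le _ _))
      (not_le.2 hδ)
  obtain ⟨t, htK, ht⟩ := Set.not_subset.1 hnot
  refine ⟨δ, hδpos, t, ?_⟩
  rintro _ ⟨p, hp, rfl⟩
  by_contra hF
  exact ht (Set.mem_biUnion (hP.mem_toFinset.2 hp) ⟨htK, fun h => hF (hKF h)⟩)
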